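/- Let g be a Riemannian metric on ℝ² \ B̄(0,1) asymptotic to the flat cone metric dr² + P²r²dθ² with error in O₂(r^{−2ε}), ε > 0. Then the total geodesic curvature of the circle γ_R = {r = R} with respect to g satisfies ∫_{γ_R} κ_g ds_g → 2πP as R → ∞. -/

import Mathlib

open Real MeasureTheory Filter Topology Matrix
open scoped BigOperators

noncomputable section

/-- Points of the plane. -/
abbrev Pt := ℝ × ℝ

/-- A (coordinate expression of a) metric on (a subset of) the plane:
a field of `2 × 2` matrices. -/
abbrev Met := Pt → Matrix (Fin 2) (Fin 2) ℝ

/-- Euclidean radius of a point of the plane. -/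
def rad (p : Pt) : ℝ := Real.sqrt (p.1 ^ 2 + p.2 ^ 2)

/-- The standard coordinate directions. -/
def e2 : Fin 2 → Pt := ![(1, 0), (0, 1)]

/-- Partial derivative in the `i`-th coordinate direction. -/
def pd (i : Fin 2) (f : Pt → ℝ) (p : Pt) : ℝ := fderiv ℝ f p (e2 i)

/-- Second partial derivatives. -/
def pd2 (i j : Fin 2) (f : Pt → ℝ) (p : Pt) : ℝ := pd i (fun q => pd j f q) p

/-- Christoffel symbols `Γ^k_{ij}` of the Levi-Civita connection of `g`. -/
def christoffel (g : Met) (k i j : Fin 2) (p : Pt) : ℝ :=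
  (1 / 2) * ∑ l : Fin 2, (g p)⁻¹ k l *
    (pd i (fun q => g q l j) p + pd j (fun q => g q l i) p - pd l (fun q => g q i j) p)

/-- Curvature tensor `R^l_{ijk}` of the Levi-Civita connection of `g`. -/
def riem (g : Met) (l i j k : Fin 2) (p : Pt) : ℝ :=
  pd i (fun q => christoffel g l j k q) p - pd j (fun q => christoffel g l i k q) p
    + ∑ m : Fin 2, (christoffel g l i m p * christoffel g m j k p
        - christoffel g l j m p * christoffel g m i k p)

/-- Gaussian curvature `K = R_{0101} / det g`. -/
def gaussCurv (g : Met) (p : Pt) : ℝ :=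
  (∑ l : Fin 2, g p 0 l * riem g l 1 0 1 p) / (g p).det

/-- Scalar curvature of a two-dimensional metric: twice the Gaussian curvature. -/
def scalCurv (g : Met) (p : Pt) : ℝ := 2 * gaussCurv g p

/-- The inner product of two tangent vectors with respect to `g` at `p`. -/
def innerG (g : Met) (p : Pt) (u v : Fin 2 → ℝ) : ℝ :=
  ∑ i : Fin 2, ∑ j : Fin 2, g p i j * u i * v j

/-- The length of a tangent vector with respect to `g` at `p`. -/
def normG (g : Met) (p : Pt) (u : Fin 2 → ℝ) : ℝ := Real.sqrt (innerG g p u u)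

/-- Velocity (coordinate derivative) of a curve in the plane. -/
def vel (c : ℝ → Pt) (t : ℝ) : Fin 2 → ℝ :=
  ![deriv (fun s => (c s).1) t, deriv (fun s => (c s).2) t]

/-- Covariant acceleration `(∇_{c'} c')^k` of a curve with respect to `g`. -/
def accel (g : Met) (c : ℝ → Pt) (t : ℝ) : Fin 2 → ℝ := fun k =>
  deriv (fun s => vel c s k) t
    + ∑ i : Fin 2, ∑ j : Fin 2, christoffel g k i j (c t) * vel c t i * vel c t j

/-- Rotation by 90 degrees with respect to the metric `g` and the standard
orientation of the plane (`g(Ju, v) = ω(u, v)` for the Riemannian area form `ω`),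
with the sign convention making the outward-oriented Euclidean circle have
geodesic curvature `+1/R`. -/
def Jrot (g : Met) (p : Pt) (u : Fin 2 → ℝ) : Fin 2 → ℝ := fun i =>
  Real.sqrt (g p).det * ∑ k : Fin 2, (g p)⁻¹ i k * (if k = 0 then -u 1 else u 0)

/-- Geodesic curvature of a curve `c` at time `t` with respect to `g`. -/
def geodCurv (g : Met) (c : ℝ → Pt) (t : ℝ) : ℝ :=
  innerG g (c t) (accel g c t) (Jrot g (c t) (vel c t)) / (normG g (c t) (vel c t)) ^ 3

/-- Speed of a curve with respect to `g`. -/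
def speedG (g : Met) (c : ℝ → Pt) (t : ℝ) : ℝ := normG g (c t) (vel c t)

/-- Total geodesic curvature `∫ κ ds` of a curve over the parameter range `[a,b]`. -/
def totalGeodCurv (g : Met) (c : ℝ → Pt) (a b : ℝ) : ℝ :=
  ∫ t in a..b, geodCurv g c t * speedG g c t

/-- The length of a curve with respect to `g`. -/
def lengthG (g : Met) (c : ℝ → Pt) (a b : ℝ) : ℝ := ∫ t in a..b, speedG g c t

/-- The "quasilocal mass" of a loop `c` of period `T`: the angle defect
`2π - ∫_γ κ ds` (equivalently, by Gauss–Bonnet, the angle defect of the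
holonomy of parallel transport around the loop). -/
def qlm (g : Met) (c : ℝ → Pt) (T : ℝ) : ℝ := 2 * π - totalGeodCurv g c 0 T

/-- The round circle of radius `R`. -/
def circleC (R : ℝ) : ℝ → Pt := fun t => (R * Real.cos t, R * Real.sin t)

/-- The flat cone metric of parameter `P`, i.e. `dr² + P²r²dθ²`, written in
Cartesian coordinates: `dx² + dy² - ((1-P²)/(x²+y²)) (x dy - y dx)²`. -/
def coneMetric (P : ℝ) : Met := fun p =>
  !![1 - (1 - P ^ 2) * p.2 ^ 2 / (p.1 ^ 2 + p.2 ^ 2),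
      (1 - P ^ 2) * p.1 * p.2 / (p.1 ^ 2 + p.2 ^ 2);
     (1 - P ^ 2) * p.1 * p.2 / (p.1 ^ 2 + p.2 ^ 2),
      1 - (1 - P ^ 2) * p.1 ^ 2 / (p.1 ^ 2 + p.2 ^ 2)]

/-- The flat cylinder metric `dr² + p²dθ²` (cone parameter `P = 0`),
in Cartesian coordinates on the exterior region. -/
def cylMetric (pc : ℝ) : Met := fun q =>
  !![q.1 ^ 2 / (q.1 ^ 2 + q.2 ^ 2) + pc ^ 2 * q.2 ^ 2 / (q.1 ^ 2 + q.2 ^ 2) ^ 2,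
      q.1 * q.2 / (q.1 ^ 2 + q.2 ^ 2) - pc ^ 2 * q.1 * q.2 / (q.1 ^ 2 + q.2 ^ 2) ^ 2;
     q.1 * q.2 / (q.1 ^ 2 + q.2 ^ 2) - pc ^ 2 * q.1 * q.2 / (q.1 ^ 2 + q.2 ^ 2) ^ 2,
      q.2 ^ 2 / (q.1 ^ 2 + q.2 ^ 2) + pc ^ 2 * q.1 ^ 2 / (q.1 ^ 2 + q.2 ^ 2) ^ 2]

/-- The exterior region `ℝ² \ B̄(0,1)`. -/
def ExtSet : Set Pt := {p | 1 < rad p}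

/-- `g` is a smooth Riemannian metric on `U`. -/
def IsMetricOn (g : Met) (U : Set Pt) : Prop :=
  (∀ i j : Fin 2, ContDiffOn ℝ (⊤ : ℕ∞) (fun p => g p i j) U) ∧
    ∀ p ∈ U, (g p).IsSymm ∧ (g p).PosDef

/-- The decay condition `O₂(r^{-2ε})` for a matrix-valued field, beyond radius `R₀`:
`|f| + r|∂f| + r²|∂²f| ≤ C r^{-2ε}`. -/
def IsO2Decay (h : Pt → Matrix (Fin 2) (Fin 2) ℝ) (ε R₀ : ℝ) : Prop :=
  ∃ C > 0, ∀ p : Pt, R₀ < rad p → ∀ i j : Fin 2,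
    |h p i j| + rad p * ∑ k : Fin 2, |pd k (fun q => h q i j) p|
      + rad p ^ 2 * ∑ k : Fin 2, ∑ l : Fin 2, |pd2 k l (fun q => h q i j) p|
      ≤ C * rad p ^ (-(2 * ε))

/-- `V` is a parallel vector field along the curve `c`, for the Levi-Civita
connection of `g`: `dV^k/dt + Γ^k_{ij} (c')^i V^j = 0`. -/
def IsParallel (g : Met) (c : ℝ → Pt) (V : ℝ → Fin 2 → ℝ) : Prop :=
  ∀ t : ℝ, ∀ k : Fin 2,
    deriv (fun s => V s k) t
      + ∑ i : Fin 2, ∑ j : Fin 2, christoffel g k i j (c t) * vel c t i * V t j = 0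

/-- The holonomy of parallel transport of `g` around the loop `c : [0,T]` is
rotation by the angle `α`: in some positively oriented `g`-orthonormal frame at
the base point, parallel transport acts as the rotation matrix of angle `α`. -/
def IsHolonomyRotation (g : Met) (c : ℝ → Pt) (T α : ℝ) : Prop :=
  ∃ u v : Fin 2 → ℝ,
    innerG g (c 0) u u = 1 ∧ innerG g (c 0) v v = 1 ∧ innerG g (c 0) u v = 0 ∧
    0 < u 0 * v 1 - u 1 * v 0 ∧
    ∃ U V : ℝ → Fin 2 → ℝ, IsParallel g c U ∧ IsParallel g c V ∧
      U 0 = u ∧ V 0 = v ∧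
      (U T = fun k => Real.cos α * u k + Real.sin α * v k) ∧
      (V T = fun k => -Real.sin α * u k + Real.cos α * v k)

/-- The loop `c : [0,T]` winds once (positively) around the point `z`. -/
def WindsOnceAround (c : ℝ → Pt) (T : ℝ) (z : Pt) : Prop :=
  ∃ ρ θ : ℝ → ℝ, Continuous ρ ∧ Continuous θ ∧ (∀ t, 0 < ρ t) ∧
    (∀ t, c t - z = (ρ t * Real.cos (θ t), ρ t * Real.sin (θ t))) ∧
    θ T = θ 0 + 2 * π

/-- `c` is a smooth simple closed curve of period `T`. -/
def IsSimpleClosedCurve (c : ℝ → Pt) (T : ℝ) : Prop :=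
  ContDiff ℝ (⊤ : ℕ∞) c ∧ 0 < T ∧ (∀ t, c (t + T) = c t) ∧
    (∀ t, vel c t ≠ 0) ∧ Set.InjOn c (Set.Ico 0 T)


/-- Jacobian matrix `∂F^i/∂x^j` of a map of the plane. -/
def jac (F : Pt → Pt) (p : Pt) : Matrix (Fin 2) (Fin 2) ℝ := fun i j =>
  pd j (fun q => if i = 0 then (F q).1 else (F q).2) p

/-- Pullback `F*h = Jᵀ (h ∘ F) J` of a metric under a map of the plane. -/
def pullMet (F : Pt → Pt) (h : Met) : Met := fun p =>
  (jac F p)ᵀ * h (F p) * jac F p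

/-- A topological surface, possibly with boundary, given by an atlas of charts
into the closed upper half plane, with smooth transition maps. -/
structure Surface0 where
  M : Type
  ts : TopologicalSpace M
  t2 : @T2Space M ts
  charts : Set (PartialHomeomorph M Pt)
  cover : ∀ x : M, ∃ φ ∈ charts, x ∈ φ.source
  target_eq : ∀ φ ∈ charts, ∃ U : Set Pt, IsOpen U ∧ φ.target = U ∩ {p : Pt | 0 ≤ p.2}
  smooth_trans : ∀ φ ∈ charts, ∀ ψ ∈ charts,
    ContDiffOn ℝ (⊤ : ℕ∞) (ψ ∘ φ.symm) (φ.target ∩ φ.symm ⁻¹' ψ.source)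

attribute [instance] Surface0.ts Surface0.t2

/-- A Riemannian surface: a surface together with, in each chart, a coordinate
expression for the metric, compatible under pullback by transition maps. -/
structure Surface extends Surface0 where
  gM : PartialHomeomorph M Pt → Met
  metric : ∀ φ ∈ charts, IsMetricOn (gM φ) φ.target
  compat : ∀ φ ∈ charts, ∀ ψ ∈ charts, ∀ p ∈ φ.target ∩ φ.symm ⁻¹' ψ.source,
    gM φ p = pullMet (ψ ∘ φ.symm) (gM ψ) p

/-- A distinguished chart at each point. -/
def Surface0.chartAt (S : Surface0) (x : S.M) : PartialHomeomorph S.M Pt :=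
  (S.cover x).choose

lemma Surface0.chartAt_mem (S : Surface0) (x : S.M) : S.chartAt x ∈ S.charts :=
  (S.cover x).choose_spec.1

lemma Surface0.mem_chartAt_source (S : Surface0) (x : S.M) : x ∈ (S.chartAt x).source :=
  (S.cover x).choose_spec.2

/-- The Gaussian curvature of a Riemannian surface, computed in a chart. -/
def Surface.curv (S : Surface) (x : S.M) : ℝ :=
  gaussCurv (S.gM (S.chartAt x)) (S.chartAt x x)

/-- The scalar curvature (twice the Gaussian curvature). -/
def Surface.scal (S : Surface) (x : S.M) : ℝ := 2 * S.curv x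

/-- The boundary of a surface: points mapped by some chart to `{y = 0}`. -/
def Surface0.boundary (S : Surface0) : Set S.M :=
  {x | ∃ φ ∈ S.charts, x ∈ φ.source ∧ (φ x).2 = 0}

/-- A surface is boundaryless if its boundary is empty. -/
def Surface0.Boundaryless (S : Surface0) : Prop := S.boundary = ∅

/-- Orientability: some subatlas covers the surface and has orientation
preserving (positive Jacobian determinant) transition maps. -/
def Surface0.Orientable (S : Surface0) : Prop :=
  ∃ A ⊆ S.charts, (∀ x : S.M, ∃ φ ∈ A, x ∈ φ.source) ∧
    ∀ φ ∈ A, ∀ ψ ∈ A, ∀ p ∈ φ.target ∩ φ.symm ⁻¹' ψ.source,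
      0 < (jac (ψ ∘ φ.symm) p).det

/-- A curve in a surface that is smooth when read in any chart. -/
def Surface0.SmoothCurve (S : Surface0) (c : ℝ → S.M) : Prop :=
  Continuous c ∧ ∀ t : ℝ, ∀ φ ∈ S.charts, c t ∈ φ.source →
    ContDiffAt ℝ (⊤ : ℕ∞) (fun s => φ (c s)) t

/-- The speed of a curve in a surface, using the distinguished chart. -/
def Surface.speed (S : Surface) (c : ℝ → S.M) (t : ℝ) : ℝ :=
  speedG (S.gM (S.chartAt (c t))) (fun s => S.chartAt (c t) (c s)) t

/-- The Riemannian length of a curve in a surface. -/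
def Surface.length (S : Surface) (c : ℝ → S.M) (a b : ℝ) : ℝ :=
  ∫ t in a..b, S.speed c t

/-- The Riemannian distance on a surface. -/
def Surface.dist (S : Surface) (x y : S.M) : ℝ :=
  sInf {L : ℝ | ∃ c : ℝ → S.M, S.toSurface0.SmoothCurve c ∧ c 0 = x ∧ c 1 = y ∧
    L = S.length c 0 1}

/-- Metric completeness of a Riemannian surface: every Cauchy sequence for the
Riemannian distance converges. -/
def Surface.Complete (S : Surface) : Prop :=
  ∀ u : ℕ → S.M,
    (∀ ε > (0:ℝ), ∃ N : ℕ, ∀ m ≥ N, ∀ n ≥ N, S.dist (u m) (u n) < ε) →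
    ∃ x : S.M, ∀ ε > (0:ℝ), ∃ N : ℕ, ∀ n ≥ N, S.dist (u n) x < ε

/-- A homeomorphism of a surface region to a subset of the plane is smooth if it
and its inverse are smooth when read in all charts. -/
def Surface0.SmoothPH (S : Surface0) (f : PartialHomeomorph S.M Pt) : Prop :=
  (∀ φ ∈ S.charts, ContDiffOn ℝ (⊤ : ℕ∞) (f ∘ φ.symm) (φ.target ∩ φ.symm ⁻¹' f.source)) ∧
  (∀ φ ∈ S.charts, ContDiffOn ℝ (⊤ : ℕ∞) (φ ∘ f.symm) (f.target ∩ f.symm ⁻¹' φ.source))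

/-- The surface region `E` is an asymptotically conical end of cone parameter
`P` and decay rate `ε`: it is diffeomorphic to `ℝ² \ B̄(0,1)`, carrying (the
coordinate expression of) the metric `gE` with
`gE - [dx² + dy² - ((1-P²)/(x²+y²))(x dy - y dx)²] ∈ O₂((x²+y²)^{-ε})`. -/
def Surface.IsConicalEnd (S : Surface) (E : Set S.M) (P ε : ℝ) : Prop :=
  ∃ f : PartialHomeomorph S.M Pt, f.source = E ∧ f.target = ExtSet ∧
    S.toSurface0.SmoothPH f ∧
    ∃ gE : Met, IsMetricOn gE ExtSet ∧
      (∀ φ ∈ S.charts, ∀ p ∈ φ.target ∩ φ.symm ⁻¹' E,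
        S.gM φ p = pullMet (f ∘ φ.symm) gE p) ∧
      IsO2Decay (fun p => gE p - coneMetric P p) ε 1

/-- Likewise, an asymptotically cylindrical end: the model is `dr² + p²dθ²`. -/
def Surface.IsCylindricalEnd (S : Surface) (E : Set S.M) (pc ε : ℝ) : Prop :=
  ∃ f : PartialHomeomorph S.M Pt, f.source = E ∧ f.target = ExtSet ∧
    S.toSurface0.SmoothPH f ∧
    ∃ gE : Met, IsMetricOn gE ExtSet ∧
      (∀ φ ∈ S.charts, ∀ p ∈ φ.target ∩ φ.symm ⁻¹' E,
        S.gM φ p = pullMet (f ∘ φ.symm) gE p) ∧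
      IsO2Decay (fun p => gE p - cylMetric pc p) ε 1

/-- The set of connected components of the complement of `K`. -/
def compsOutside (X : Type) [TopologicalSpace X] (K : Set X) : Set (Set X) :=
  {C | ∃ x ∈ Kᶜ, C = connectedComponentIn Kᶜ x}

/-- A surface is asymptotically conical if outside some compact set it has
finitely many connected components, each an asymptotically conical end. -/
def Surface.AsympConical (S : Surface) : Prop :=
  ∃ K : Set S.M, IsCompact K ∧ K ≠ Set.univ ∧
    (compsOutside S.M K).Finite ∧
    ∀ E ∈ compsOutside S.M K, ∃ P > (0:ℝ), ∃ ε > (0:ℝ), S.IsConicalEnd E P ε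

/-- A surface is asymptotically cylindrical if outside some compact set it has
finitely many connected components, each an asymptotically cylindrical end. -/
def Surface.AsympCylindrical (S : Surface) : Prop :=
  ∃ K : Set S.M, IsCompact K ∧ K ≠ Set.univ ∧
    (compsOutside S.M K).Finite ∧
    ∀ E ∈ compsOutside S.M K, ∃ pc > (0:ℝ), ∃ ε > (0:ℝ), S.IsCylindricalEnd E pc ε

/-- A (noncompact) space has exactly one end. -/
def HasOneEnd (X : Type) [TopologicalSpace X] : Prop :=
  (¬ IsCompact (Set.univ : Set X)) ∧
  ∀ K : Set X, IsCompact K → ∃ K' : Set X, IsCompact K' ∧ K ⊆ K' ∧ IsConnected K'ᶜ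

/-- The components of the complement of `K` with noncompact closure. -/
def unbCompsOutside (X : Type) [TopologicalSpace X] (K : Set X) : Set (Set X) :=
  {C | ∃ x ∈ Kᶜ, C = connectedComponentIn Kᶜ x ∧ ¬ IsCompact (closure C)}

/-- A space has exactly `n` ends. -/
def HasEnds (X : Type) [TopologicalSpace X] (n : ℕ) : Prop :=
  ∃ K : Set X, IsCompact K ∧ ∀ K' : Set X, IsCompact K' → K ⊆ K' →
    (unbCompsOutside X K').ncard = n

/-- The Borel σ-algebra on a surface. -/
instance Surface0.ms (S : Surface0) : MeasurableSpace S.M := borel S.M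

/-- `μ` is the Riemannian measure of the surface `S`: in every chart its
pushforward has density `√(det g)` with respect to Lebesgue measure. -/
def Surface.IsRiemMeasure (S : Surface) (μ : Measure S.M) : Prop :=
  ∀ φ ∈ S.charts, ∀ A : Set Pt, MeasurableSet A → A ⊆ φ.target →
    μ (φ.symm '' A) = ∫⁻ p in A, ENNReal.ofReal (Real.sqrt (S.gM φ p).det)

/-- A diffeomorphism from the surface onto the plane. -/
def Surface0.DiffeoToPlane (S : Surface0) : Prop :=
  ∃ f : S.M ≃ₜ Pt,
    (∀ φ ∈ S.charts, ContDiffOn ℝ (⊤ : ℕ∞) (f ∘ φ.symm) φ.target) ∧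
    (∀ φ ∈ S.charts, ContDiffOn ℝ (⊤ : ℕ∞) (φ ∘ f.symm) (f.symm ⁻¹' φ.source))

/-- An isometry (global diffeomorphism pulling the Euclidean metric back to the
given metric) from the surface onto the Euclidean plane. -/
def Surface.IsometricToPlane (S : Surface) : Prop :=
  ∃ f : S.M ≃ₜ Pt,
    (∀ φ ∈ S.charts, ContDiffOn ℝ (⊤ : ℕ∞) (f ∘ φ.symm) φ.target) ∧
    (∀ φ ∈ S.charts, ContDiffOn ℝ (⊤ : ℕ∞) (φ ∘ f.symm) (f.symm ⁻¹' φ.source)) ∧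
    (∀ φ ∈ S.charts, ∀ p ∈ φ.target,
      S.gM φ p = pullMet (f ∘ φ.symm) (fun _ => (1 : Matrix (Fin 2) (Fin 2) ℝ)) p)

/-- The closed unit disc in the plane (Euclidean). -/
def DiscSet : Set Pt := {p : Pt | rad p ≤ 1}

/-- A diffeomorphism from the surface onto the closed unit disc. -/
def Surface0.DiffeoToDisc (S : Surface0) : Prop :=
  ∃ f : S.M ≃ₜ DiscSet,
    (∀ φ ∈ S.charts, ContDiffOn ℝ (⊤ : ℕ∞) (fun p => ((f (φ.symm p) : Pt))) φ.target) ∧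
    ∃ G : Pt → S.M, (∀ p (hp : p ∈ DiscSet), G p = f.symm ⟨p, hp⟩) ∧
      ∀ φ ∈ S.charts, ContDiffOn ℝ (⊤ : ℕ∞) (fun p => φ (G p)) (DiscSet ∩ G ⁻¹' φ.source)

/-- Euler characteristic via finite simplicial complexes: `χ` is an Euler
characteristic of `X` if `X` is homeomorphic to the space of a finite simplicial
complex with alternating face-count sum `χ`. -/
def HasEulerChar (X : Type) [TopologicalSpace X] (χ : ℤ) : Prop :=
  ∃ (n : ℕ) (K : Geometry.SimplicialComplex ℝ (Fin n → ℝ)) (h : K.faces.Finite),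
    Nonempty (X ≃ₜ K.space) ∧
    χ = ∑ s ∈ h.toFinset, (-1 : ℤ) ^ (s.card - 1)

/-- Points of space `ℝ³`. -/
abbrev Pt3 := Fin 3 → ℝ

/-- The cylinder of radius `r` in `ℝ³`. -/
def CylSet (r : ℝ) : Set Pt3 := {v : Pt3 | (v 0) ^ 2 + (v 1) ^ 2 = r ^ 2}

/-- Pullback of the Euclidean metric of `ℝ³` under a map `F : ℝ² → ℝ³`:
`(F*δ)_{ij} = ∑_k ∂_i F^k ∂_j F^k`. -/
def pull32 (F : Pt → Pt3) : Met := fun p i j =>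
  ∑ k : Fin 3, pd i (fun q => F q k) p * pd j (fun q => F q k) p

/-- An isometry from the surface onto the round cylinder of radius `r` in `ℝ³`
(with its induced, i.e. product, metric). -/
def Surface.IsometricToCylinder (S : Surface) (r : ℝ) : Prop :=
  ∃ f : S.M ≃ₜ CylSet r,
    (∀ φ ∈ S.charts, ∀ k : Fin 3,
      ContDiffOn ℝ (⊤ : ℕ∞) (fun p => ((f (φ.symm p) : Pt3) k)) φ.target) ∧
    (∀ φ ∈ S.charts, ∀ p ∈ φ.target,
      S.gM φ p = pull32 (fun q => (f (φ.symm q) : Pt3)) p)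
/-- radial unit vector -/
def erV (t : ℝ) : Fin 2 → ℝ := ![Real.cos t, Real.sin t]
/-- tangential unit vector -/
def etV (t : ℝ) : Fin 2 → ℝ := ![-Real.sin t, Real.cos t]

/-- contraction of the first derivatives of `g` -/
def dG (g : Met) (p : Pt) (z u w : Fin 2 → ℝ) : ℝ :=
  ∑ k : Fin 2, ∑ i : Fin 2, ∑ j : Fin 2, pd k (fun q => g q i j) p * z k * u i * w j

/-- the integrand in terms of frame components -/
def Fint (a b b' d U W Z : ℝ) : ℝ :=
  Real.sqrt (a * d - b * b') * (1 - (d * (U - W / 2) - b * (Z / 2)) / (a * d - b * b')) / d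

lemma pd_zero_eq (f : Pt → ℝ) (x y f' : ℝ) (hf : DifferentiableAt ℝ f (x, y))
    (h : HasDerivAt (fun t => f (t, y)) f' x) : pd 0 f (x, y) = f' := by
  have h1 : HasDerivAt (fun t : ℝ => ((t, y) : Pt)) (1, 0) x :=
    (hasDerivAt_id x).prodMk (hasDerivAt_const x y)
  have h2 := hf.hasFDerivAt.comp_hasDerivAt x h1
  exact h2.unique h

lemma pd_one_eq (f : Pt → ℝ) (x y f' : ℝ) (hf : DifferentiableAt ℝ f (x, y))
    (h : HasDerivAt (fun t => f (x, t)) f' y) : pd 1 f (x, y) = f' := by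
  have h1 : HasDerivAt (fun t : ℝ => ((x, t) : Pt)) (0, 1) y :=
    (hasDerivAt_const y x).prodMk (hasDerivAt_id y)
  have h2 := hf.hasFDerivAt.comp_hasDerivAt y h1
  exact h2.unique h

lemma cone_diff (P : ℝ) (x y : ℝ) (h : x ^ 2 + y ^ 2 ≠ 0) (i j : Fin 2) :
    DifferentiableAt ℝ (fun q => coneMetric P q i j) (x, y) := by
  fin_cases i <;> fin_cases j <;> simp [coneMetric] <;> fun_prop (disch := simpa using h)

lemma cone_pd (P x y : ℝ) (h : x ^ 2 + y ^ 2 ≠ 0) :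
    pd 0 (fun q => coneMetric P q 0 0) (x, y) = (1 - P ^ 2) * (2 * x * y ^ 2) / (x ^ 2 + y ^ 2) ^ 2 ∧
    pd 0 (fun q => coneMetric P q 0 1) (x, y) = (1 - P ^ 2) * (y ^ 3 - x ^ 2 * y) / (x ^ 2 + y ^ 2) ^ 2 ∧
    pd 0 (fun q => coneMetric P q 1 0) (x, y) = (1 - P ^ 2) * (y ^ 3 - x ^ 2 * y) / (x ^ 2 + y ^ 2) ^ 2 ∧
    pd 0 (fun q => coneMetric P q 1 1) (x, y) = - (1 - P ^ 2) * (2 * x * y ^ 2) / (x ^ 2 + y ^ 2) ^ 2 ∧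
    pd 1 (fun q => coneMetric P q 0 0) (x, y) = - (1 - P ^ 2) * (2 * y * x ^ 2) / (x ^ 2 + y ^ 2) ^ 2 ∧
    pd 1 (fun q => coneMetric P q 0 1) (x, y) = (1 - P ^ 2) * (x ^ 3 - y ^ 2 * x) / (x ^ 2 + y ^ 2) ^ 2 ∧
    pd 1 (fun q => coneMetric P q 1 0) (x, y) = (1 - P ^ 2) * (x ^ 3 - y ^ 2 * x) / (x ^ 2 + y ^ 2) ^ 2 ∧
    pd 1 (fun q => coneMetric P q 1 1) (x, y) = (1 - P ^ 2) * (2 * y * x ^ 2) / (x ^ 2 + y ^ 2) ^ 2 := by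
  have hx : HasDerivAt (fun t : ℝ => t ^ 2 + y ^ 2) (2 * x) x := by
    simpa using (hasDerivAt_pow 2 x).add_const (y ^ 2)
  have hy : HasDerivAt (fun t : ℝ => x ^ 2 + t ^ 2) (2 * y) y := by
    simpa using (hasDerivAt_pow 2 y).const_add (x ^ 2)
  have x2 : HasDerivAt (fun t : ℝ => (1 - P ^ 2) * t ^ 2) ((1 - P ^ 2) * (2 * x)) x := by
    simpa using (hasDerivAt_pow 2 x).const_mul (1 - P ^ 2)
  have y2 : HasDerivAt (fun t : ℝ => (1 - P ^ 2) * t ^ 2) ((1 - P ^ 2) * (2 * y)) y := by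
    simpa using (hasDerivAt_pow 2 y).const_mul (1 - P ^ 2)
  have x1 : HasDerivAt (fun t : ℝ => (1 - P ^ 2) * t * y) ((1 - P ^ 2) * y) x := by
    simpa using ((hasDerivAt_id x).const_mul (1 - P ^ 2)).mul_const y
  have y1 : HasDerivAt (fun t : ℝ => (1 - P ^ 2) * x * t) ((1 - P ^ 2) * x) y := by
    simpa using (hasDerivAt_id y).const_mul ((1 - P ^ 2) * x)
  have cx : HasDerivAt (fun _ : ℝ => (1 - P ^ 2) * y ^ 2) 0 x := hasDerivAt_const _ _
  have cy : HasDerivAt (fun _ : ℝ => (1 - P ^ 2) * x ^ 2) 0 y := hasDerivAt_const _ _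
  refine ⟨?_, ?_, ?_, ?_, ?_, ?_, ?_, ?_⟩
  · apply pd_zero_eq _ _ _ _ (cone_diff P x y h 0 0)
    have := (cx.div hx h).const_sub 1
    simp only [coneMetric]
    exact this.congr_deriv (by ring)
  · apply pd_zero_eq _ _ _ _ (cone_diff P x y h 0 1)
    have := (x1.div hx h)
    simp only [coneMetric]
    exact this.congr_deriv (by ring)
  · apply pd_zero_eq _ _ _ _ (cone_diff P x y h 1 0)
    have := (x1.div hx h)
    simp only [coneMetric]
    exact this.congr_deriv (by ring)
  · apply pd_zero_eq _ _ _ _ (cone_diff P x y h 1 1)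
    have := (x2.div hx h).const_sub 1
    simp only [coneMetric]
    exact this.congr_deriv (by ring)
  · apply pd_one_eq _ _ _ _ (cone_diff P x y h 0 0)
    have := (y2.div hy h).const_sub 1
    simp only [coneMetric]
    exact this.congr_deriv (by ring)
  · apply pd_one_eq _ _ _ _ (cone_diff P x y h 0 1)
    have := (y1.div hy h)
    simp only [coneMetric]
    exact this.congr_deriv (by ring)
  · apply pd_one_eq _ _ _ _ (cone_diff P x y h 1 0)
    have := (y1.div hy h)
    simp only [coneMetric]
    exact this.congr_deriv (by ring)
  · apply pd_one_eq _ _ _ _ (cone_diff P x y h 1 1)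
    have := (cy.div hy h).const_sub 1
    simp only [coneMetric]
    exact this.congr_deriv (by ring)

lemma circ_sq (R t : ℝ) : (R * Real.cos t) ^ 2 + (R * Real.sin t) ^ 2 = R ^ 2 := by
  linear_combination R ^ 2 * Real.sin_sq_add_cos_sq t

lemma rad_circle (R t : ℝ) (hR : 0 ≤ R) : rad (circleC R t) = R := by
  simp only [rad, circleC, circ_sq, Real.sqrt_sq hR]

lemma cone_inner (P R t : ℝ) (hR : 0 < R) :
    innerG (coneMetric P) (circleC R t) (erV t) (erV t) = 1 ∧
    innerG (coneMetric P) (circleC R t) (erV t) (etV t) = 0 ∧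
    innerG (coneMetric P) (circleC R t) (etV t) (erV t) = 0 ∧
    innerG (coneMetric P) (circleC R t) (etV t) (etV t) = P ^ 2 := by
  have hR' := hR.ne'
  have hs : Real.sin t ^ 2 = 1 - Real.cos t ^ 2 := Real.sin_sq t
  simp only [innerG, coneMetric, circleC, erV, etV, Fin.sum_univ_two, circ_sq, Matrix.of_apply,
    Matrix.cons_val_zero, Matrix.cons_val_one]
  generalize Real.sin t = s at *
  generalize Real.cos t = c at *
  refine ⟨?_, ?_, ?_, ?_⟩
  · field_simp
    linear_combination hs
  · field_simp
    ring
  · field_simp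
    ring
  · field_simp
    linear_combination (1 - (1 - P ^ 2) * (s ^ 2 + c ^ 2 + 1)) * hs

lemma cone_dG (P R t : ℝ) (hR : 0 < R) :
    R * dG (coneMetric P) (circleC R t) (etV t) (erV t) (etV t) = 1 - P ^ 2 ∧
    R * dG (coneMetric P) (circleC R t) (erV t) (etV t) (etV t) = 0 ∧
    R * dG (coneMetric P) (circleC R t) (etV t) (etV t) (etV t) = 0 := by
  have hR' := hR.ne'
  have hs : Real.sin t ^ 2 + Real.cos t ^ 2 = 1 := Real.sin_sq_add_cos_sq t
  obtain ⟨h1, h2, h3, h4, h5, h6, h7, h8⟩ := cone_pd P (R * Real.cos t) (R * Real.sin t)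
    (by rw [circ_sq]; positivity)
  simp only [dG, circleC, erV, etV, Fin.sum_univ_two, h1, h2, h3, h4, h5, h6, h7, h8, circ_sq,
    Matrix.cons_val_zero, Matrix.cons_val_one]
  generalize Real.sin t = s at *
  generalize Real.cos t = c at *
  have e3 : (s ^ 2 + c ^ 2) ^ 3 = 1 := by rw [hs]; norm_num
  refine ⟨?_, ?_, ?_⟩
  · field_simp
    linear_combination (1 - P ^ 2) * e3
  · field_simp
    ring
  · field_simp
    ring

lemma isOpen_ExtSet : IsOpen ExtSet := by
  have : Continuous rad := by unfold rad; fun_prop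
  exact isOpen_lt continuous_const this

lemma integrand_eq (g : Met) (R t : ℝ) (hR : 0 < R)
    (hd : 0 < innerG g (circleC R t) (etV t) (etV t))
    (hdet : 0 < innerG g (circleC R t) (erV t) (erV t) * innerG g (circleC R t) (etV t) (etV t)
      - innerG g (circleC R t) (erV t) (etV t) * innerG g (circleC R t) (etV t) (erV t)) :
    geodCurv g (circleC R) t * speedG g (circleC R) t =
    Fint (innerG g (circleC R t) (erV t) (erV t)) (innerG g (circleC R t) (erV t) (etV t))
      (innerG g (circleC R t) (etV t) (erV t)) (innerG g (circleC R t) (etV t) (etV t))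
      (R * dG g (circleC R t) (etV t) (erV t) (etV t))
      (R * dG g (circleC R t) (erV t) (etV t) (etV t))
      (R * dG g (circleC R t) (etV t) (etV t) (etV t)) := by
  have hv : ∀ s, vel (circleC R) s = fun k => R * etV s k := by
    intro s
    ext k
    fin_cases k <;> simp [vel, circleC, etV]
  have hac : ∀ k, deriv (fun s => vel (circleC R) s k) t = - (R * erV t k) := by
    intro k
    simp only [hv]
    fin_cases k <;> simp [etV, erV]
  have hs : Real.sin t ^ 2 + Real.cos t ^ 2 = 1 := Real.sin_sq_add_cos_sq t
  have hdeteq : innerG g (circleC R t) (erV t) (erV t) * innerG g (circleC R t) (etV t) (etV t)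
      - innerG g (circleC R t) (erV t) (etV t) * innerG g (circleC R t) (etV t) (erV t)
      = (g (circleC R t)).det := by
    simp only [innerG, erV, etV, Fin.sum_univ_two, Matrix.det_fin_two, Matrix.cons_val_zero,
      Matrix.cons_val_one]
    generalize Real.sin t = s at *
    generalize Real.cos t = c at *
    have e2 : (s ^ 2 + c ^ 2) ^ 2 = 1 := by rw [hs]; norm_num
    linear_combination (g (circleC R t) 0 0 * g (circleC R t) 1 1 - g (circleC R t) 0 1 * g (circleC R t) 1 0) * e2
  have hN : innerG g (circleC R t) (vel (circleC R) t) (vel (circleC R) t)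
      = R ^ 2 * innerG g (circleC R t) (etV t) (etV t) := by
    rw [hv]; simp only [innerG, Fin.sum_univ_two]; ring
  have hI : innerG g (circleC R t) (accel g (circleC R) t)
      (Jrot g (circleC R t) (vel (circleC R) t)) =
      Real.sqrt (g (circleC R t)).det *
        (accel g (circleC R) t 0 * -(R * Real.cos t) + accel g (circleC R) t 1 * -(R * Real.sin t)) := by
    rw [hdeteq] at hdet
    have hne := hdet.ne'
    simp only [innerG, Jrot, hv, Fin.sum_univ_two, Matrix.inv_def, Matrix.adjugate_fin_two,
      Ring.inverse_eq_inv', etV, Matrix.smul_apply, smul_eq_mul, Matrix.of_apply,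
      Matrix.cons_val_zero, Matrix.cons_val_one, if_true, one_ne_zero, if_false,
      Matrix.cons_val', Matrix.cons_val_fin_one, Matrix.empty_val']
    generalize Real.sqrt (g (circleC R t)).det = q
    rw [Matrix.det_fin_two] at *
    field_simp
    ring
  have hA : accel g (circleC R) t 0 * -(R * Real.cos t) + accel g (circleC R) t 1 * -(R * Real.sin t)
     = R ^ 2 * (1 - (innerG g (circleC R t) (etV t) (etV t) *
       (R * dG g (circleC R t) (etV t) (erV t) (etV t) -
         R * dG g (circleC R t) (erV t) (etV t) (etV t) / 2)
       - innerG g (circleC R t) (erV t) (etV t) *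
         (R * dG g (circleC R t) (etV t) (etV t) (etV t) / 2)) / (g (circleC R t)).det) := by
    rw [hdeteq] at hdet
    have hne := hdet.ne'
    simp only [accel, hac]
    simp only [christoffel, innerG, dG, hv, Fin.sum_univ_two, Matrix.inv_def,
      Matrix.adjugate_fin_two,
      Ring.inverse_eq_inv', etV, erV, Matrix.smul_apply, smul_eq_mul, Matrix.of_apply,
      Matrix.cons_val_zero, Matrix.cons_val_one, 
      Matrix.cons_val', Matrix.cons_val_fin_one, Matrix.empty_val']
    generalize pd 0 (fun q => g q 0 0) (circleC R t) = p000
    generalize pd 0 (fun q => g q 0 1) (circleC R t) = p001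
    generalize pd 0 (fun q => g q 1 0) (circleC R t) = p010
    generalize pd 0 (fun q => g q 1 1) (circleC R t) = p011
    generalize pd 1 (fun q => g q 0 0) (circleC R t) = p100
    generalize pd 1 (fun q => g q 0 1) (circleC R t) = p101
    generalize pd 1 (fun q => g q 1 0) (circleC R t) = p110
    generalize pd 1 (fun q => g q 1 1) (circleC R t) = p111
    generalize (g (circleC R t)).det = D at *
    generalize g (circleC R t) 0 0 = x00
    generalize g (circleC R t) 0 1 = x01
    generalize g (circleC R t) 1 0 = x10
    generalize g (circleC R t) 1 1 = x11
    generalize Real.sin t = s at *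
    generalize Real.cos t = c at *
    linear_combination (R ^ 2 + R * (c * (x11 * (R ^ 2 * (s ^ 2 * p000 - s * c * p001 - s * c * p100
      + c ^ 2 * p101) - R ^ 2 / 2 * (s ^ 2 * p000 - s * c * p001 - s * c * p010 + c ^ 2 * p011))
      - x01 * (R ^ 2 * (s ^ 2 * p010 - s * c * p011 - s * c * p110 + c ^ 2 * p111)
        - R ^ 2 / 2 * (s ^ 2 * p100 - s * c * p101 - s * c * p110 + c ^ 2 * p111)))
      + s * (-x10 * (R ^ 2 * (s ^ 2 * p000 - s * c * p001 - s * c * p100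
      + c ^ 2 * p101) - R ^ 2 / 2 * (s ^ 2 * p000 - s * c * p001 - s * c * p010 + c ^ 2 * p011))
      + x00 * (R ^ 2 * (s ^ 2 * p010 - s * c * p011 - s * c * p110 + c ^ 2 * p111)
        - R ^ 2 / 2 * (s ^ 2 * p100 - s * c * p101 - s * c * p110 + c ^ 2 * p111)))) / D) * hs
  unfold geodCurv speedG normG
  rw [hN, hI, hA, Fint, hdeteq]
  have hN' : 0 < R ^ 2 * innerG g (circleC R t) (etV t) (etV t) := by positivity
  set d := innerG g (circleC R t) (etV t) (etV t)
  have hq : Real.sqrt (R ^ 2 * d) ≠ 0 := (Real.sqrt_pos.2 hN').ne'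
  have hq2 : Real.sqrt (R ^ 2 * d) ^ 2 = R ^ 2 * d := Real.sq_sqrt hN'.le
  have : ∀ X : ℝ, X / Real.sqrt (R ^ 2 * d) ^ 3 * Real.sqrt (R ^ 2 * d) = X / (R ^ 2 * d) := by
    intro X
    generalize Real.sqrt (R ^ 2 * d) = q at *
    rw [← hq2]
    field_simp
  rw [this]
  have hd' := hd.ne'
  have hR' := hR.ne'
  field_simp

lemma abs_erV (t : ℝ) (i : Fin 2) : |erV t i| ≤ 1 := by
  fin_cases i
  · simpa [erV] using Real.abs_cos_le_one t
  · simpa [erV] using Real.abs_sin_le_one t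

lemma abs_etV (t : ℝ) (i : Fin 2) : |etV t i| ≤ 1 := by
  fin_cases i
  · simpa [etV] using Real.abs_sin_le_one t
  · simpa [etV] using Real.abs_cos_le_one t

lemma cont_erV (i : Fin 2) : Continuous (fun t => erV t i) := by
  fin_cases i
  · simpa [erV] using Real.continuous_cos
  · simpa [erV] using Real.continuous_sin

lemma cont_etV (i : Fin 2) : Continuous (fun t => etV t i) := by
  fin_cases i
  · exact Real.continuous_sin.neg
  · simpa [etV] using Real.continuous_cos

lemma cont_circle (R : ℝ) : Continuous (circleC R) := by
  unfold circleC; fun_prop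

lemma circle_mem (R t : ℝ) (hR : 1 < R) : circleC R t ∈ ExtSet := by
  show 1 < rad (circleC R t)
  rw [rad_circle R t (by linarith)]; exact hR

lemma bound_tendsto (K ε : ℝ) (hε : 0 < ε) :
    Tendsto (fun x : ℝ × ℝ => K * x.1 ^ (-(2 * ε))) (atTop ×ˢ (⊤ : Filter ℝ)) (𝓝 0) := by
  have h := ((tendsto_rpow_neg_atTop (y := 2 * ε) (by positivity)).comp
    (tendsto_fst (f := (atTop : Filter ℝ)) (g := (⊤ : Filter ℝ)))).const_mul K
  simpa using h

lemma ev_fst : ∀ᶠ x : ℝ × ℝ in atTop ×ˢ (⊤ : Filter ℝ), 1 < x.1 :=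
  (tendsto_fst (f := (atTop : Filter ℝ)) (g := (⊤ : Filter ℝ))).eventually (eventually_gt_atTop 1)

lemma inner_tendsto (g : Met) (P ε C : ℝ) (hε : 0 < ε)
    (hC : ∀ p : Pt, 1 < rad p → ∀ i j : Fin 2, |g p i j - coneMetric P p i j| ≤ C * rad p ^ (-(2 * ε)))
    (u w : ℝ → Fin 2 → ℝ) (hu : ∀ t i, |u t i| ≤ 1) (hw : ∀ t i, |w t i| ≤ 1) (c : ℝ)
    (hc : ∀ R t : ℝ, 0 < R → innerG (coneMetric P) (circleC R t) (u t) (w t) = c) :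
    Tendsto (fun x : ℝ × ℝ => innerG g (circleC x.1 x.2) (u x.2) (w x.2))
      (atTop ×ˢ (⊤ : Filter ℝ)) (𝓝 c) := by
  rw [tendsto_iff_norm_sub_tendsto_zero]
  refine squeeze_zero' (Eventually.of_forall fun _ => norm_nonneg _) ?_
    (bound_tendsto (4 * C) ε hε)
  filter_upwards [ev_fst] with x hx
  obtain ⟨R, t⟩ := x
  simp only at hx ⊢
  have hp : 1 < rad (circleC R t) := circle_mem R t hx
  have hb : ∀ i j, |(g (circleC R t) i j - coneMetric P (circleC R t) i j) * u t i * w t j|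
      ≤ C * R ^ (-(2 * ε)) := by
    intro i j
    have h := hC _ hp i j
    rw [rad_circle R t (by linarith)] at h
    rw [abs_mul, abs_mul]
    calc _ ≤ |g (circleC R t) i j - coneMetric P (circleC R t) i j| * 1 * 1 := by
          gcongr
          · exact hu t i
          · exact hw t j
      _ ≤ _ := by simpa using h
  rw [← hc R t (by linarith), Real.norm_eq_abs]
  have : innerG g (circleC R t) (u t) (w t) - innerG (coneMetric P) (circleC R t) (u t) (w t)
      = ∑ i : Fin 2, ∑ j : Fin 2,
        (g (circleC R t) i j - coneMetric P (circleC R t) i j) * u t i * w t j := by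
    simp only [innerG, Fin.sum_univ_two]; ring
  rw [this]
  calc _ ≤ ∑ i : Fin 2, ∑ j : Fin 2,
        |(g (circleC R t) i j - coneMetric P (circleC R t) i j) * u t i * w t j| :=
        (Finset.abs_sum_le_sum_abs _ _).trans
          (Finset.sum_le_sum fun i _ => Finset.abs_sum_le_sum_abs _ _)
    _ ≤ ∑ i : Fin 2, ∑ j : Fin 2, C * R ^ (-(2 * ε)) :=
        Finset.sum_le_sum fun i _ => Finset.sum_le_sum fun j _ => hb i j
    _ = _ := by simp; ring

lemma dG_tendsto (g : Met) (P ε C : ℝ) (hε : 0 < ε)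
    (hC : ∀ p : Pt, 1 < rad p → ∀ k i j : Fin 2,
      rad p * |pd k (fun q => g q i j) p - pd k (fun q => coneMetric P q i j) p|
        ≤ C * rad p ^ (-(2 * ε)))
    (z u w : ℝ → Fin 2 → ℝ) (hz : ∀ t i, |z t i| ≤ 1)
    (hu : ∀ t i, |u t i| ≤ 1) (hw : ∀ t i, |w t i| ≤ 1) (c : ℝ)
    (hc : ∀ R t : ℝ, 0 < R → R * dG (coneMetric P) (circleC R t) (z t) (u t) (w t) = c) :
    Tendsto (fun x : ℝ × ℝ => x.1 * dG g (circleC x.1 x.2) (z x.2) (u x.2) (w x.2))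
      (atTop ×ˢ (⊤ : Filter ℝ)) (𝓝 c) := by
  rw [tendsto_iff_norm_sub_tendsto_zero]
  refine squeeze_zero' (Eventually.of_forall fun _ => norm_nonneg _) ?_
    (bound_tendsto (8 * C) ε hε)
  filter_upwards [ev_fst] with x hx
  obtain ⟨R, t⟩ := x
  simp only at hx ⊢
  have hp : 1 < rad (circleC R t) := circle_mem R t hx
  have hb : ∀ k i j, |R * (pd k (fun q => g q i j) (circleC R t)
      - pd k (fun q => coneMetric P q i j) (circleC R t)) * z t k * u t i * w t j|
      ≤ C * R ^ (-(2 * ε)) := by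
    intro k i j
    have h := hC _ hp k i j
    rw [rad_circle R t (by linarith)] at h
    rw [abs_mul, abs_mul, abs_mul, abs_mul, abs_of_pos (show 0 < R by linarith)]
    have hR0 : 0 ≤ R := by linarith
    calc _ ≤ R * |pd k (fun q => g q i j) (circleC R t)
            - pd k (fun q => coneMetric P q i j) (circleC R t)| * 1 * 1 * 1 := by
          gcongr
          · exact hz t k
          · exact hu t i
          · exact hw t j
      _ ≤ _ := by simpa using h
  rw [← hc R t (by linarith), Real.norm_eq_abs]
  have : R * dG g (circleC R t) (z t) (u t) (w t)
      - R * dG (coneMetric P) (circleC R t) (z t) (u t) (w t)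
      = ∑ k : Fin 2, ∑ i : Fin 2, ∑ j : Fin 2,
        R * (pd k (fun q => g q i j) (circleC R t)
      - pd k (fun q => coneMetric P q i j) (circleC R t)) * z t k * u t i * w t j := by
    simp only [dG, Fin.sum_univ_two]; ring
  rw [this]
  calc _ ≤ ∑ k : Fin 2, ∑ i : Fin 2, ∑ j : Fin 2,
        |R * (pd k (fun q => g q i j) (circleC R t)
      - pd k (fun q => coneMetric P q i j) (circleC R t)) * z t k * u t i * w t j| :=
        (Finset.abs_sum_le_sum_abs _ _).trans
          (Finset.sum_le_sum fun k _ => (Finset.abs_sum_le_sum_abs _ _).trans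
          (Finset.sum_le_sum fun i _ => Finset.abs_sum_le_sum_abs _ _))
    _ ≤ ∑ k : Fin 2, ∑ i : Fin 2, ∑ j : Fin 2, C * R ^ (-(2 * ε)) :=
        Finset.sum_le_sum fun k _ => Finset.sum_le_sum fun i _ =>
          Finset.sum_le_sum fun j _ => hb k i j
    _ = _ := by simp; ring

lemma inner_cont (g : Met) (hg : IsMetricOn g ExtSet) (R : ℝ) (hR : 1 < R)
    (u w : ℝ → Fin 2 → ℝ) (hu : ∀ i, Continuous fun t => u t i)
    (hw : ∀ i, Continuous fun t => w t i) :
    Continuous fun t => innerG g (circleC R t) (u t) (w t) := by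
  have h : ∀ i j, Continuous fun t => g (circleC R t) i j := fun i j =>
    (hg.1 i j).continuousOn.comp_continuous (cont_circle R) (fun t => circle_mem R t hR)
  unfold innerG
  exact continuous_finsetSum _ fun i _ => continuous_finsetSum _ fun j _ =>
    ((h i j).mul (hu i)).mul (hw j)

lemma dG_cont (g : Met) (hg : IsMetricOn g ExtSet) (R : ℝ) (hR : 1 < R)
    (z u w : ℝ → Fin 2 → ℝ) (hz : ∀ i, Continuous fun t => z t i)
    (hu : ∀ i, Continuous fun t => u t i)
    (hw : ∀ i, Continuous fun t => w t i) :
    Continuous fun t => dG g (circleC R t) (z t) (u t) (w t) := by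
  have h : ∀ k i j, Continuous fun t => pd k (fun q => g q i j) (circleC R t) := by
    intro k i j
    have h1 := (hg.1 i j).continuousOn_fderiv_of_isOpen isOpen_ExtSet (by norm_num)
    have h2 := h1.comp_continuous (cont_circle R) (fun t => circle_mem R t hR)
    unfold pd
    exact h2.clm_apply continuous_const
  unfold dG
  exact continuous_finsetSum _ fun k _ => continuous_finsetSum _ fun i _ =>
    continuous_finsetSum _ fun j _ => (((h k i j).mul (hz k)).mul (hu i)).mul (hw j)

/-- For a metric `g` on `ℝ² \ B̄(0,1)` asymptotic to the flat cone
metric of parameter `P > 0` with error in `O₂(r^{-2ε})`, the total geodesic curvature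
of the circle of radius `R` tends to `2πP` as `R → ∞`. -/
theorem total_geodesic_curvature_tendsto (g : Met) (P ε : ℝ)
    (hP : 0 < P) (hε : 0 < ε) (hg : IsMetricOn g ExtSet)
    (hdecay : IsO2Decay (fun p => g p - coneMetric P p) ε 1) :
    Filter.Tendsto (fun R => totalGeodCurv g (circleC R) 0 (2 * π))
      Filter.atTop (nhds (2 * π * P)) := by
  obtain ⟨C, hC0, hC⟩ := hdecay
  have hC1 : ∀ p : Pt, 1 < rad p → ∀ i j : Fin 2,
      |g p i j - coneMetric P p i j| ≤ C * rad p ^ (-(2 * ε)) := by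
    intro p hp i j
    refine le_trans ?_ (hC p hp i j)
    rw [add_assoc]
    have hr : 0 ≤ rad p := by linarith
    simp only [Matrix.sub_apply]
    refine le_add_of_nonneg_right ?_
    positivity
  have hC2 : ∀ p : Pt, 1 < rad p → ∀ k i j : Fin 2,
      rad p * |pd k (fun q => g q i j) p - pd k (fun q => coneMetric P q i j) p|
        ≤ C * rad p ^ (-(2 * ε)) := by
    intro p hp k i j
    refine le_trans ?_ (hC p hp i j)
    have hr : 0 ≤ rad p := by linarith
    have hdg : DifferentiableAt ℝ (fun q => g q i j) p :=
      ((hg.1 i j).contDiffAt (isOpen_ExtSet.mem_nhds hp)).differentiableAt (by norm_num)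
    have hne : p.1 ^ 2 + p.2 ^ 2 ≠ 0 := by
      intro h0
      rw [rad, h0, Real.sqrt_zero] at hp
      linarith
    have hdc : DifferentiableAt ℝ (fun q => coneMetric P q i j) p :=
      cone_diff P p.1 p.2 hne i j
    have hsub : pd k (fun q => g q i j) p - pd k (fun q => coneMetric P q i j) p
        = pd k (fun q => (g q - coneMetric P q) i j) p := by
      simp only [pd, Matrix.sub_apply]
      rw [fderiv_fun_sub hdg hdc]
      rfl
    rw [hsub]
    have h1 : |pd k (fun q => (g q - coneMetric P q) i j) p| ≤
        ∑ k : Fin 2, |pd k (fun q => (g q - coneMetric P q) i j) p| :=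
      Finset.single_le_sum (f := fun k => |pd k (fun q => (g q - coneMetric P q) i j) p|)
        (fun _ _ => abs_nonneg _) (Finset.mem_univ k)
    have h2 := mul_le_mul_of_nonneg_left h1 hr
    have h3 := abs_nonneg ((g p - coneMetric P p) i j)
    have h4 : 0 ≤ rad p ^ 2 * ∑ k : Fin 2, ∑ l : Fin 2,
      |pd2 k l (fun q => (g q - coneMetric P q) i j) p| := by positivity
    linarith
  have ta := inner_tendsto g P ε C hε hC1 erV erV abs_erV abs_erV 1
    (fun R t hR => (cone_inner P R t hR).1)
  have tb := inner_tendsto g P ε C hε hC1 erV etV abs_erV abs_etV 0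
    (fun R t hR => (cone_inner P R t hR).2.1)
  have tb' := inner_tendsto g P ε C hε hC1 etV erV abs_etV abs_erV 0
    (fun R t hR => (cone_inner P R t hR).2.2.1)
  have td := inner_tendsto g P ε C hε hC1 etV etV abs_etV abs_etV (P ^ 2)
    (fun R t hR => (cone_inner P R t hR).2.2.2)
  have tU := dG_tendsto g P ε C hε hC2 etV erV etV abs_etV abs_erV abs_etV (1 - P ^ 2)
    (fun R t hR => (cone_dG P R t hR).1)
  have tW := dG_tendsto g P ε C hε hC2 erV etV etV abs_erV abs_etV abs_etV 0
    (fun R t hR => (cone_dG P R t hR).2.1)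
  have tZ := dG_tendsto g P ε C hε hC2 etV etV etV abs_etV abs_etV abs_etV 0
    (fun R t hR => (cone_dG P R t hR).2.2)
  have tdet := (ta.mul td).sub (tb.mul tb')
  have hP2 : (0:ℝ) < P ^ 2 := by positivity
  have hdet0 : (1 * P ^ 2 - 0 * 0 : ℝ) ≠ 0 := by simpa using hP.ne'
  have tF := (tdet.sqrt.mul (((((td.mul (tU.sub (tW.div_const 2))).sub
    (tb.mul (tZ.div_const 2))).div tdet hdet0)).const_sub 1)).div td hP2.ne'
  have hval : Real.sqrt (1 * P ^ 2 - 0 * 0) * (1 - (P ^ 2 * (1 - P ^ 2 - 0 / 2) - 0 * (0 / 2)) /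
      (1 * P ^ 2 - 0 * 0)) / P ^ 2 = P := by
    have : (1 * P ^ 2 - 0 * 0 : ℝ) = P ^ 2 := by ring
    rw [this, Real.sqrt_sq hP.le]
    field_simp
    ring
  rw [hval] at tF
  have ed := td.eventually (lt_mem_nhds hP2)
  have edet := tdet.eventually (lt_mem_nhds (show (0:ℝ) < 1 * P ^ 2 - 0 * 0 by simpa using hP2))
  have toall : ∀ {p : ℝ × ℝ → Prop}, (∀ᶠ x in atTop ×ˢ (⊤ : Filter ℝ), p x) →
      ∀ᶠ R in (atTop : Filter ℝ), ∀ t, p (R, t) := by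
    intro p hp
    obtain ⟨pa, hpa, pb, hpb, h⟩ := eventually_prod_iff.1 hp
    rw [eventually_top] at hpb
    filter_upwards [hpa] with R hR t using h hR (hpb t)
  rw [Metric.tendsto_nhds]
  intro δ hδ
  have hδ' : 0 < δ / (4 * π) := by positivity
  filter_upwards [toall (tF.eventually (Metric.ball_mem_nhds P hδ')), toall ed, toall edet,
    eventually_gt_atTop (1:ℝ)] with R hF hd hdet hR
  have hR0 : 0 < R := by linarith
  have heq : ∀ t, geodCurv g (circleC R) t * speedG g (circleC R) t = _ := fun t =>
    integrand_eq g R t hR0 (hd t) (hdet t)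
  have hcont : Continuous fun t => geodCurv g (circleC R) t * speedG g (circleC R) t := by
    simp only [heq, Fint]
    have ca := inner_cont g hg R hR erV erV cont_erV cont_erV
    have cb := inner_cont g hg R hR erV etV cont_erV cont_etV
    have cb' := inner_cont g hg R hR etV erV cont_etV cont_erV
    have cd := inner_cont g hg R hR etV etV cont_etV cont_etV
    have cU := (dG_cont g hg R hR etV erV etV cont_etV cont_erV cont_etV).const_mul R
    have cW := (dG_cont g hg R hR erV etV etV cont_erV cont_etV cont_etV).const_mul R
    have cZ := (dG_cont g hg R hR etV etV etV cont_etV cont_etV cont_etV).const_mul R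
    have cdet := (ca.mul cd).sub (cb.mul cb')
    exact (cdet.sqrt.mul (continuous_const.sub (((cd.mul (cU.sub (cW.div_const 2))).sub
      (cb.mul (cZ.div_const 2))).div cdet (fun t => (hdet t).ne')))).div cd (fun t => (hd t).ne')
  have hle : ∀ t, ‖geodCurv g (circleC R) t * speedG g (circleC R) t - P‖ ≤ δ / (4 * π) := by
    intro t
    rw [heq t]
    exact le_of_lt (hF t)
  have hint : totalGeodCurv g (circleC R) 0 (2 * π) - 2 * π * P
      = ∫ t in (0:ℝ)..(2 * π), (geodCurv g (circleC R) t * speedG g (circleC R) t - P) := by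
    rw [intervalIntegral.integral_sub (hcont.intervalIntegrable _ _) (by simp)]
    simp [totalGeodCurv]
  rw [Real.dist_eq, hint, ← Real.norm_eq_abs]
  refine lt_of_le_of_lt (intervalIntegral.norm_integral_le_of_norm_le_const fun t _ => hle t) ?_
  rw [sub_zero, abs_of_pos (by positivity)]
  have : δ / (4 * π) * (2 * π) = δ / 2 := by field_simp; norm_num
  rw [this]; linarith

end
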